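/- Let Z be a standard normal random variable, and for S_0 > 0, K > 0, σ > 0, r ∈ ℝ, T > 0 set S_T = S_0 exp( (r − σ²/2) T + σ √T Z ). Then the discounted expected call payoff admits the Black–Scholes closed form: e^{−rT} · E[ (S_T − K)^+ ] = S_0 Φ(d_1) − K e^{−rT} Φ(d_2), where d_1 = ( log(S_0/K) + (r + σ²/2) T ) / (σ √T), d_2 = d_1 − σ √T, and Φ is the standard normal cumulative distribution function. -/

import Mathlib

open MeasureTheory ProbabilityTheory Filter Set
open scoped ENNReal NNReal

/-! An exponential tilt by `t` turns the Gaussian law `N(m, v)` into `N(m + vt, v)`. Hence, for a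
log-price `X` with law `N(m, v)`, the mean of `exp X` on the exercise event `{log K ≤ X}` is
`E[exp X]` times the probability of that event under the tilted law, and each of the two terms of
the pricing formula becomes a standard normal tail probability. -/

lemma tilted_mul_gaussianReal (m : ℝ) (v : ℝ≥0) (t : ℝ) :
    (gaussianReal m v).tilted (t * ·) = gaussianReal (m + v * t) v := by
  have := isProbabilityMeasure_tilted (integrable_exp_mul_gaussianReal (μ := m) (v := v) t)
  refine Measure.ext_of_complexMGF_id_eq (funext fun z ↦ ?_)
  calc complexMGF id ((gaussianReal m v).tilted (t * ·)) z
      = ∫ x, Complex.exp ((z + t) * x) / mgf id (gaussianReal m v) t ∂gaussianReal m v := by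
        simp only [complexMGF, integral_tilted, mgf, id_eq, Complex.real_smul,
          Complex.ofReal_div, Complex.ofReal_exp, Complex.ofReal_mul, add_mul, Complex.exp_add]
        congr with x
        ring
    _ = complexMGF id (gaussianReal m v) (z + t) / mgf id (gaussianReal m v) t :=
        integral_div _ _
    _ = complexMGF id (gaussianReal (m + v * t) v) z := by
        simp only [complexMGF_id_gaussianReal, mgf_id_gaussianReal, Complex.ofReal_exp,
          ← Complex.exp_sub]
        congr 1
        push_cast
        ring

lemma setIntegral_exp_mul_gaussianReal (m : ℝ) (v : ℝ≥0) (t : ℝ) (s : Set ℝ) :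
    ∫ x in s, Real.exp (t * x) ∂gaussianReal m v =
      Real.exp (m * t + v * t ^ 2 / 2) * (gaussianReal (m + v * t) v).real s := by
  rw [← tilted_mul_gaussianReal, measureReal_def,
    tilted_mul_apply_eq_ofReal_integral_mgf (X := fun x ↦ x), mgf_fun_id_gaussianReal,
    ENNReal.toReal_ofReal (by positivity), integral_div, mul_div_cancel₀ _ (Real.exp_ne_zero _)]

lemma cdf_gaussianReal_eq_integral (m : ℝ) {v : ℝ≥0} (hv : v ≠ 0) (x : ℝ) :
    cdf (gaussianReal m v) x = ∫ u in Iic x, gaussianPDFReal m v u := by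
  rw [cdf_eq_real, measureReal_def, gaussianReal_apply_eq_integral m hv,
    ENNReal.toReal_ofReal (integral_nonneg (gaussianPDFReal_nonneg m v))]

lemma cdf_gaussianReal_zero_one (x : ℝ) :
    cdf (gaussianReal 0 1) x =
      (Real.sqrt (2 * Real.pi))⁻¹ * ∫ u in Iic x, Real.exp (-u ^ 2 / 2) := by
  simp [cdf_gaussianReal_eq_integral 0 one_ne_zero, gaussianPDFReal, integral_const_mul]

lemma measureReal_Ici_gaussianReal (m : ℝ) {v : ℝ≥0} (hv : v ≠ 0) (a : ℝ) :
    (gaussianReal m v).real (Ici a) = cdf (gaussianReal 0 1) ((m - a) / √v) := by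
  have hsqrt : 0 < √(v : ℝ) := by positivity
  have hvar : NNReal.mk (√(v : ℝ) ^ 2) (sq_nonneg _) = v :=
    NNReal.eq (Real.sq_sqrt v.coe_nonneg)
  have hstd : HasLaw (fun x ↦ (m - x) / √v) (gaussianReal 0 1) (gaussianReal m v) := by
    simpa only [id, hvar, sub_self, zero_div, div_self hv] using
      gaussianReal_div_const (gaussianReal_const_sub (HasLaw.id (μ := gaussianReal m v)) m) √v
  have hIci : Ici a = {x | (m - x) / √v ≤ (m - a) / √v} := by
    ext x
    rw [mem_Ici, mem_ofPred_eq, div_le_div_iff_of_pos_right hsqrt, sub_le_sub_iff_left]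
  rw [cdf_eq_real, hIci]
  exact hstd.measureReal_eq measurableSet_Iic

lemma integral_max_sub_const_zero {α : Type*} [MeasurableSpace α] {μ : Measure α}
    [IsFiniteMeasure μ] {f : α → ℝ} (hf : Integrable f μ) (c : ℝ) :
    ∫ x, max (f x - c) 0 ∂μ = ∫ x in {x | c ≤ f x}, f x ∂μ - c * μ.real {x | c ≤ f x} := by
  have hmeas : NullMeasurableSet {x | c ≤ f x} μ :=
    nullMeasurableSet_le aemeasurable_const hf.aemeasurable
  have hmax : (fun x ↦ max (f x - c) 0) = {x | c ≤ f x}.indicator (fun x ↦ f x - c) := by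
    ext x
    by_cases hx : c ≤ f x
    · simp [hx]
    · simp [hx, (not_le.mp hx).le]
  rw [hmax, integral_indicator₀ hmeas, integral_sub hf.integrableOn (integrable_const c),
    setIntegral_const, smul_eq_mul, mul_comm c]

lemma integral_max_exp_sub_gaussianReal (m : ℝ) {v : ℝ≥0} (hv : v ≠ 0) {K : ℝ} (hK : 0 < K) :
    ∫ x, max (Real.exp x - K) 0 ∂gaussianReal m v =
      Real.exp (m + v / 2) * cdf (gaussianReal 0 1) ((m + v - Real.log K) / √v) -
        K * cdf (gaussianReal 0 1) ((m - Real.log K) / √v) := by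
  have hint : Integrable Real.exp (gaussianReal m v) := by
    simpa using integrable_exp_mul_gaussianReal (μ := m) (v := v) 1
  have hexercise : {x | K ≤ Real.exp x} = Ici (Real.log K) := by
    ext x
    exact (Real.log_le_iff_le_exp hK).symm
  have htilt : ∫ x in Ici (Real.log K), Real.exp x ∂gaussianReal m v =
      Real.exp (m + v / 2) * (gaussianReal (m + v) v).real (Ici (Real.log K)) := by
    simpa using setIntegral_exp_mul_gaussianReal m v 1 (Ici (Real.log K))
  rw [integral_max_sub_const_zero hint, hexercise, htilt, measureReal_Ici_gaussianReal _ hv,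
    measureReal_Ici_gaussianReal _ hv]

lemma integral_max_exp_const_add_mul_sub {Ω : Type*} [MeasurableSpace Ω] {P : Measure Ω}
    {Z : Ω → ℝ} (hZ : HasLaw Z (gaussianReal 0 1) P) (m : ℝ) {s K : ℝ} (hs : 0 < s)
    (hK : 0 < K) :
    ∫ ω, max (Real.exp (m + s * Z ω) - K) 0 ∂P =
      Real.exp (m + s ^ 2 / 2) * cdf (gaussianReal 0 1) ((m + s ^ 2 - Real.log K) / s) -
        K * cdf (gaussianReal 0 1) ((m - Real.log K) / s) := by
  let v : ℝ≥0 := .mk (s ^ 2) (sq_nonneg s)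
  have hv : v ≠ 0 := NNReal.coe_ne_zero.mp (pow_ne_zero 2 hs.ne')
  have hlaw : HasLaw (fun ω ↦ m + s * Z ω) (gaussianReal m v) P := by
    simpa [v] using gaussianReal_const_add (gaussianReal_const_mul hZ s) m
  calc ∫ ω, max (Real.exp (m + s * Z ω) - K) 0 ∂P
      = ∫ x, max (Real.exp x - K) 0 ∂gaussianReal m v :=
        hlaw.integral_comp (f := fun x ↦ max (Real.exp x - K) 0) (by fun_prop)
    _ = Real.exp (m + s ^ 2 / 2) * cdf (gaussianReal 0 1) ((m + s ^ 2 - Real.log K) / s) -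
          K * cdf (gaussianReal 0 1) ((m - Real.log K) / s) := by
        simp [integral_max_exp_sub_gaussianReal m hv hK, v, Real.sqrt_sq hs.le]

/-- Black–Scholes closed form for the discounted expected call payoff: if `Z` is
standard normal and `S_T = S₀ exp((r − σ²/2)T + σ√T Z)`, then
`e^{−rT} E[(S_T − K)⁺] = S₀ Φ(d₁) − K e^{−rT} Φ(d₂)`, where
`d₁ = (log(S₀/K) + (r + σ²/2)T)/(σ√T)`, `d₂ = d₁ − σ√T` and `Φ` is the standard
normal cumulative distribution function. -/
theorem black_scholes_call
    {Ω : Type*} [MeasurableSpace Ω] (P : Measure Ω) [IsProbabilityMeasure P]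
    (Z : Ω → ℝ) (hZm : Measurable Z) (hZ : Measure.map Z P = gaussianReal 0 1)
    (S0 K σ r T : ℝ) (hS0 : 0 < S0) (hK : 0 < K) (hσ : 0 < σ) (hT : 0 < T)
    (Φ : ℝ → ℝ)
    (hΦ : ∀ x, Φ x = (Real.sqrt (2 * Real.pi))⁻¹ * ∫ u in Iic x, Real.exp (-u ^ 2 / 2))
    (d1 d2 : ℝ)
    (hd1 : d1 = (Real.log (S0 / K) + (r + σ ^ 2 / 2) * T) / (σ * Real.sqrt T))
    (hd2 : d2 = d1 - σ * Real.sqrt T) :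
    Real.exp (-r * T) *
        ∫ ω, max (S0 * Real.exp ((r - σ ^ 2 / 2) * T + σ * Real.sqrt T * Z ω) - K) 0 ∂P =
      S0 * Φ d1 - K * Real.exp (-r * T) * Φ d2 := by
  have hΦ_cdf (x : ℝ) : Φ x = cdf (gaussianReal 0 1) x :=
    (hΦ x).trans (cdf_gaussianReal_zero_one x).symm
  set s := σ * √T with hs_def
  have hs : 0 < s := by positivity
  have hs_sq : s ^ 2 = σ ^ 2 * T := by rw [hs_def, mul_pow, Real.sq_sqrt hT.le]
  set m := Real.log S0 + (r - σ ^ 2 / 2) * T with hm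
  have hprice (ω : Ω) :
      S0 * Real.exp ((r - σ ^ 2 / 2) * T + s * Z ω) = Real.exp (m + s * Z ω) := by
    rw [hm, add_assoc, Real.exp_add (Real.log S0), Real.exp_log hS0]
  have hforward : Real.exp (-r * T) * Real.exp (m + s ^ 2 / 2) = S0 := by
    have hexponent : -r * T + (m + s ^ 2 / 2) = Real.log S0 := by rw [hm, hs_sq]; ring
    rw [← Real.exp_add, hexponent, Real.exp_log hS0]
  have hd1' : (m + s ^ 2 - Real.log K) / s = d1 := by
    rw [hd1, hm, hs_sq, Real.log_div hS0.ne' hK.ne']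
    ring
  have hd2' : (m - Real.log K) / s = d2 := by
    rw [hd2, ← hd1']
    field_simp
    ring
  simp_rw [hprice]
  rw [integral_max_exp_const_add_mul_sub ⟨hZm.aemeasurable, hZ⟩ m hs hK, hd1', hd2',
    hΦ_cdf, hΦ_cdf]
  linear_combination cdf (gaussianReal 0 1) d1 * hforward
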